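/- Let p > 1, let μ, ν be probability measures on ℝ with finite p-th moments and distribution functions F and G, and let π be a coupling of μ and ν with joint distribution function H(x,y) = π((−∞,x] × (−∞,y]). Then ∫_{ℝ×ℝ} |y−x|^p dπ(x,y) = p(p−1) ∫_{−∞}^{∞} ∫_y^{∞} [G(y) − H(x,y)] (x−y)^{p−2} dx dy + p(p−1) ∫_{−∞}^{∞} ∫_x^{∞} [F(x) − H(x,y)] (y−x)^{p−2} dy dx. -/

import Mathlib

/-!
For fixed `y`, the layer cake formula under `π` restricted to `{Y ≤ y}` turns the integral of
`(X - y)₊ ^ (p - 1)` into `p - 1` times the integral of `π (X > x, Y ≤ y) (x - y) ^ (p - 2)` over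
`x > y`. Since `(X - Y)₊ ^ p` is `p` times the integral of `(X - y)₊ ^ (p - 1)` over `y ≥ Y`,
Tonelli's theorem expresses `𝔼[(X - Y)₊ ^ p]` through the quadrant masses
`π (X > x, Y ≤ y) = G y - H x y`. The same identity for the law of `(Y, X)` gives
`𝔼[(Y - X)₊ ^ p]`, and the two add up to `𝔼[|Y - X| ^ p]`.
-/

open MeasureTheory ENNReal Set

/-- `π` is a coupling of `μ` and `ν`. -/
def IsCoupling {α : Type*} [MeasurableSpace α] (π : MeasureTheory.Measure (α × α))
    (μ ν : MeasureTheory.Measure α) : Prop :=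
  π.map Prod.fst = μ ∧ π.map Prod.snd = ν

section IteratedIntegral

variable {α β : Type*} [MeasurableSpace α] [MeasurableSpace β] {μ : Measure α} {ν : Measure β}
  [SFinite ν] {R : Set (α × β)}

lemma lintegral_setLIntegral_swap [SFinite μ] {f : α → β → ℝ≥0∞}
    (hf : Measurable (Function.uncurry f)) (hR : MeasurableSet R) :
    ∫⁻ x, ∫⁻ y in {y | (x, y) ∈ R}, f x y ∂ν ∂μ = ∫⁻ y, ∫⁻ x in {x | (x, y) ∈ R}, f x y ∂μ ∂ν := by
  have hleft : ∀ x, MeasurableSet {y | (x, y) ∈ R} := fun x => measurable_prodMk_left hR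
  have hright : ∀ y, MeasurableSet {x | (x, y) ∈ R} := fun y => measurable_prodMk_right hR
  simp_rw [← lintegral_indicator (hleft _), ← lintegral_indicator (hright _)]
  exact lintegral_lintegral_swap (hf.indicator hR).aemeasurable

lemma integral_setIntegral_toReal {g : α × β → ℝ≥0∞} (hg : Measurable g) (hR : MeasurableSet R)
    (hfin : ∫⁻ x, ∫⁻ y in {y | (x, y) ∈ R}, g (x, y) ∂ν ∂μ ≠ ∞) :
    ∫ x, ∫ y in {y | (x, y) ∈ R}, (g (x, y)).toReal ∂ν ∂μ
      = (∫⁻ x, ∫⁻ y in {y | (x, y) ∈ R}, g (x, y) ∂ν ∂μ).toReal := by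
  have hsets : ∀ x, MeasurableSet {y | (x, y) ∈ R} := fun x => measurable_prodMk_left hR
  have hsection : Measurable fun x => ∫⁻ y in {y | (x, y) ∈ R}, g (x, y) ∂ν := by
    simp_rw [← lintegral_indicator (hsets _)]
    exact (hg.indicator hR).lintegral_prod_right'
  have hsection_lt : ∀ᵐ x ∂μ, ∫⁻ y in {y | (x, y) ∈ R}, g (x, y) ∂ν < ∞ := ae_lt_top hsection hfin
  rw [← integral_toReal hsection.aemeasurable hsection_lt]
  refine integral_congr_ae (hsection_lt.mono fun x hx => ?_)
  have hgx : Measurable fun y => g (x, y) := hg.comp measurable_prodMk_left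
  exact integral_toReal hgx.aemeasurable (ae_lt_top hgx hx.ne)

end IteratedIntegral

section LayerCake

variable {p : ℝ}

lemma lintegral_Iic_posPart_rpow {q : ℝ} (hq : 0 < q) (c : ℝ) :
    ∫⁻ t in Iic c, ENNReal.ofReal (t⁺ ^ q) = ENNReal.ofReal (c⁺ ^ (q + 1) / (q + 1)) := by
  have hind : ∀ t : ℝ, ENNReal.ofReal (t⁺ ^ q)
      = (Ioi 0).indicator (fun t => ENNReal.ofReal (t ^ q)) t := by
    intro t
    rcases lt_or_ge 0 t with ht | ht
    · rw [indicator_of_mem (mem_Ioi.2 ht), posPart_of_nonneg ht.le]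
    · rw [indicator_of_notMem (notMem_Ioi.2 ht), posPart_of_nonpos ht, Real.zero_rpow hq.ne',
        ENNReal.ofReal_zero]
  have hIoc : Ioi 0 ∩ Iic c = Ioc 0 c⁺ := by
    ext t
    simp only [mem_inter_iff, mem_Ioi, mem_Iic, mem_Ioc, posPart_def, le_sup_iff]
    grind
  simp_rw [hind]
  rw [setLIntegral_indicator measurableSet_Ioi, hIoc, ← ofReal_integral_eq_lintegral_ofReal,
    ← intervalIntegral.integral_of_le (posPart_nonneg c), integral_rpow (Or.inl (by linarith)),
    Real.zero_rpow (by linarith), sub_zero]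
  · exact (intervalIntegrable_iff_integrableOn_Ioc_of_le (posPart_nonneg c)).1
      (intervalIntegral.intervalIntegrable_rpow' (by linarith))
  · filter_upwards [ae_restrict_mem measurableSet_Ioc] with t ht
    exact Real.rpow_nonneg ht.1.le q

lemma ofReal_posPart_sub_rpow_eq_lintegral_Ici (hp : 1 < p) (a b : ℝ) :
    ENNReal.ofReal ((a - b)⁺ ^ p)
      = ENNReal.ofReal p * ∫⁻ y in Ici b, ENNReal.ofReal ((a - y)⁺ ^ (p - 1)) := by
  have hreflect : ∫⁻ y in Ici b, ENNReal.ofReal ((a - y)⁺ ^ (p - 1))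
      = ∫⁻ t in Iic (a - b), ENNReal.ofReal (t⁺ ^ (p - 1)) := by
    rw [← (Measure.measurePreserving_sub_left volume a).setLIntegral_comp_preimage measurableSet_Iic
      (by fun_prop), preimage_const_sub_Iic, _root_.sub_sub_cancel]
  rw [hreflect, lintegral_Iic_posPart_rpow (by linarith), sub_add_cancel,
    ← ENNReal.ofReal_mul (by linarith), mul_div_cancel₀ _ (by linarith)]

lemma lintegral_posPart_sub_rpow_eq_lintegral_meas_lt_mul {Ω : Type*} [MeasurableSpace Ω]
    (P : Measure Ω) {X : Ω → ℝ} (hX : AEMeasurable X P) (c : ℝ) {q : ℝ} (hq : 0 < q) :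
    ∫⁻ ω, ENNReal.ofReal ((X ω - c)⁺ ^ q) ∂P
      = ENNReal.ofReal q * ∫⁻ x in Ioi c, P {ω | x < X ω} * ENNReal.ofReal ((x - c) ^ (q - 1)) := by
  rw [lintegral_rpow_eq_lintegral_meas_lt_mul P (.of_forall fun ω => posPart_nonneg (X ω - c))
      (by fun_prop) hq,
    ← (measurePreserving_sub_right volume c).setLIntegral_comp_preimage_emb
      (measurableEmbedding_subRight c), preimage_sub_const_Ioi, zero_add]
  congr 1
  refine setLIntegral_congr_fun measurableSet_Ioi fun x (hx : c < x) => ?_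
  have hset : {ω | x - c < (X ω - c)⁺} = {ω | x < X ω} := by
    ext ω
    simp only [mem_ofPred_eq, posPart_def, lt_sup_iff]
    grind
  simp only [hset]

end LayerCake

section QuadrantMass

variable {p : ℝ} {π : Measure (ℝ × ℝ)}

theorem lintegral_posPart_sub_rpow_eq_quadrant [SFinite π] (hp : 1 < p) :
    ∫⁻ z, ENNReal.ofReal ((z.1 - z.2)⁺ ^ p) ∂π
      = ENNReal.ofReal (p * (p - 1)) *
        ∫⁻ y, ∫⁻ x in Ioi y, π (Ioi x ×ˢ Iic y) * ENNReal.ofReal ((x - y) ^ (p - 2)) := by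
  have hquadrant : ∀ x y : ℝ, π.restrict (Prod.snd ⁻¹' Iic y) {z | x < z.1} = π (Ioi x ×ˢ Iic y) :=
    fun x y => Measure.restrict_apply (measurableSet_lt measurable_const measurable_fst)
  calc ∫⁻ z, ENNReal.ofReal ((z.1 - z.2)⁺ ^ p) ∂π
      = ENNReal.ofReal p *
          ∫⁻ z, (∫⁻ y in Ici z.2, ENNReal.ofReal ((z.1 - y)⁺ ^ (p - 1))) ∂π := by
        simp_rw [ofReal_posPart_sub_rpow_eq_lintegral_Ici hp]
        exact lintegral_const_mul' _ _ ofReal_ne_top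
    _ = ENNReal.ofReal p *
          ∫⁻ y, ∫⁻ z in Prod.snd ⁻¹' Iic y, ENNReal.ofReal ((z.1 - y)⁺ ^ (p - 1)) ∂π := by
        congr 1
        exact lintegral_setLIntegral_swap (R := {w : (ℝ × ℝ) × ℝ | w.1.2 ≤ w.2})
          (f := fun z y => ENNReal.ofReal ((z.1 - y)⁺ ^ (p - 1))) (by fun_prop)
          (measurableSet_le (by fun_prop) (by fun_prop))
    _ = ENNReal.ofReal p * ∫⁻ y, ENNReal.ofReal (p - 1) *
          ∫⁻ x in Ioi y, π (Ioi x ×ˢ Iic y) * ENNReal.ofReal ((x - y) ^ (p - 2)) := by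
        simp_rw [lintegral_posPart_sub_rpow_eq_lintegral_meas_lt_mul _ measurable_fst.aemeasurable
          _ (sub_pos.2 hp), hquadrant, sub_sub, one_add_one_eq_two]
    _ = _ := by
        rw [lintegral_const_mul' _ _ ofReal_ne_top, ← mul_assoc, ← ENNReal.ofReal_mul (by linarith)]

lemma measurable_measure_Ioi_prod_Iic [SFinite π] :
    Measurable fun w : ℝ × ℝ => π (Ioi w.2 ×ˢ Iic w.1) := by
  have hlt : MeasurableSet {u : (ℝ × ℝ) × (ℝ × ℝ) | u.1.2 < u.2.1} :=
    measurableSet_lt (by fun_prop) (by fun_prop)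
  have hle : MeasurableSet {u : (ℝ × ℝ) × (ℝ × ℝ) | u.2.2 ≤ u.1.1} :=
    measurableSet_le (by fun_prop) (by fun_prop)
  exact measurable_measure_prodMk_left (hlt.inter hle)

theorem integral_posPart_sub_rpow_eq_quadrant [IsFiniteMeasure π] (hp : 1 < p)
    (hint : Integrable (fun z : ℝ × ℝ => (z.1 - z.2)⁺ ^ p) π) :
    ∫ z, (z.1 - z.2)⁺ ^ p ∂π
      = p * (p - 1) * ∫ y, ∫ x in Ioi y, π.real (Ioi x ×ˢ Iic y) * (x - y) ^ (p - 2) := by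
  have hpp : 0 < p * (p - 1) := mul_pos (by linarith) (by linarith)
  have hnonneg : 0 ≤ᵐ[π] fun z => (z.1 - z.2)⁺ ^ p := .of_forall fun z => by positivity
  have hmass_ne_top :
      ∫⁻ y, ∫⁻ x in Ioi y, π (Ioi x ×ˢ Iic y) * ENNReal.ofReal ((x - y) ^ (p - 2)) ≠ ∞ := by
    have hlhs := hint.lintegral_lt_top.ne
    rw [lintegral_posPart_sub_rpow_eq_quadrant hp] at hlhs
    exact (lt_top_of_mul_ne_top_right hlhs (ENNReal.ofReal_pos.2 hpp).ne').ne
  have htoReal : ∀ y, ∫ x in Ioi y, π.real (Ioi x ×ˢ Iic y) * (x - y) ^ (p - 2)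
      = ∫ x in Ioi y, (π (Ioi x ×ˢ Iic y) * ENNReal.ofReal ((x - y) ^ (p - 2))).toReal := fun y =>
    setIntegral_congr_fun measurableSet_Ioi fun x hx => by
      rw [toReal_mul, toReal_ofReal (Real.rpow_nonneg (sub_pos.2 hx).le _), measureReal_def]
  rw [integral_eq_lintegral_of_nonneg_ae hnonneg hint.aestronglyMeasurable,
    lintegral_posPart_sub_rpow_eq_quadrant hp, toReal_mul, toReal_ofReal hpp.le]
  simp_rw [htoReal]
  congr 1
  exact (integral_setIntegral_toReal (R := {w : ℝ × ℝ | w.1 < w.2})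
    (g := fun w => π (Ioi w.2 ×ˢ Iic w.1) * ENNReal.ofReal ((w.2 - w.1) ^ (p - 2)))
    (measurable_measure_Ioi_prod_Iic.mul (by fun_prop))
    (measurableSet_lt measurable_fst measurable_snd) hmass_ne_top).symm

end QuadrantMass

lemma abs_rpow_eq_posPart_rpow_add_negPart_rpow {p : ℝ} (hp : p ≠ 0) (a : ℝ) :
    |a| ^ p = a⁺ ^ p + a⁻ ^ p := by
  rcases le_total 0 a with ha | ha
  · rw [abs_of_nonneg ha, posPart_of_nonneg ha, negPart_of_nonneg ha, Real.zero_rpow hp, add_zero]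
  · rw [abs_of_nonpos ha, posPart_of_nonpos ha, negPart_of_nonpos ha, Real.zero_rpow hp, zero_add]

lemma integrable_posPart_rpow_of_abs {Ω : Type*} [MeasurableSpace Ω] {P : Measure Ω} {f : Ω → ℝ}
    {p : ℝ} (hp : 0 ≤ p) (hf : AEMeasurable f P) (hint : Integrable (fun ω => |f ω| ^ p) P) :
    Integrable (fun ω => (f ω)⁺ ^ p) P := by
  refine hint.mono' (AEMeasurable.aestronglyMeasurable (by fun_prop)) (.of_forall fun ω => ?_)
  rw [Real.norm_of_nonneg (by positivity)]
  exact Real.rpow_le_rpow (posPart_nonneg _) (sup_le (le_abs_self _) (abs_nonneg _)) hp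

lemma memLp_id_of_lintegral_abs_rpow_ne_top {p : ℝ} (hp : 0 < p) {μ : Measure ℝ}
    (hμ : ∫⁻ x, ENNReal.ofReal (|x| ^ p) ∂μ ≠ ⊤) : MemLp id (ENNReal.ofReal p) μ := by
  rw [← integrable_norm_rpow_iff aestronglyMeasurable_id (ENNReal.ofReal_pos.2 hp).ne'
    ofReal_ne_top, toReal_ofReal hp.le]
  exact (lintegral_ofReal_ne_top_iff_integrable
    (measurable_id.norm.pow_const p).aestronglyMeasurable
    (.of_forall fun x => by positivity)).1 hμ

namespace IsCoupling

section MeasurableSpace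

variable {α : Type*} [MeasurableSpace α] {π : Measure (α × α)} {μ ν : Measure α}

lemma map_swap (hπ : IsCoupling π μ ν) : IsCoupling (π.map Prod.swap) ν μ := by
  constructor
  · rw [Measure.map_map measurable_fst measurable_swap]
    exact hπ.2
  · rw [Measure.map_map measurable_snd measurable_swap]
    exact hπ.1

lemma isFiniteMeasure [IsFiniteMeasure μ] (hπ : IsCoupling π μ ν) : IsFiniteMeasure π := by
  obtain ⟨rfl, -⟩ := hπ
  exact Measure.isFiniteMeasure_of_map measurable_fst.aemeasurable

lemma measureReal_compl_prod [IsFiniteMeasure π] (hπ : IsCoupling π μ ν) {s t : Set α}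
    (hs : MeasurableSet s) (ht : MeasurableSet t) :
    π.real (sᶜ ×ˢ t) = ν.real t - π.real (s ×ˢ t) := by
  have hset : sᶜ ×ˢ t = (Prod.snd ⁻¹' t) \ (s ×ˢ t) := by
    ext z
    simp only [mem_prod, mem_compl_iff, mem_sdiff, mem_preimage]
    tauto
  rw [hset, measureReal_sdiff (prod_subset_preimage_snd s t) (hs.prod ht), ← hπ.2,
    map_measureReal_apply measurable_snd ht]

end MeasurableSpace

variable {p : ℝ} {π : Measure (ℝ × ℝ)} {μ ν : Measure ℝ}

lemma integrable_abs_sub_rpow (hπ : IsCoupling π μ ν) (hp : 0 < p)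
    (hμ : ∫⁻ x, ENNReal.ofReal (|x| ^ p) ∂μ ≠ ⊤) (hν : ∫⁻ x, ENNReal.ofReal (|x| ^ p) ∂ν ≠ ⊤) :
    Integrable (fun z => |z.2 - z.1| ^ p) π := by
  obtain ⟨rfl, rfl⟩ := hπ
  have hfst := (memLp_id_of_lintegral_abs_rpow_ne_top hp hμ).comp_of_map measurable_fst.aemeasurable
  have hsnd := (memLp_id_of_lintegral_abs_rpow_ne_top hp hν).comp_of_map measurable_snd.aemeasurable
  have hsub := (hsnd.sub hfst).integrable_norm_rpow (ENNReal.ofReal_pos.2 hp).ne' ofReal_ne_top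
  rwa [toReal_ofReal hp.le] at hsub

lemma integral_posPart_fst_sub_snd_rpow_eq_cdf [IsFiniteMeasure π] (hπ : IsCoupling π μ ν)
    (hp : 1 < p) (hint : Integrable (fun z : ℝ × ℝ => (z.1 - z.2)⁺ ^ p) π) :
    ∫ z, (z.1 - z.2)⁺ ^ p ∂π
      = p * (p - 1) *
        ∫ y, ∫ x in Ioi y, (ν.real (Iic y) - π.real (Iic x ×ˢ Iic y)) * (x - y) ^ (p - 2) := by
  simp_rw [integral_posPart_sub_rpow_eq_quadrant hp hint, ← compl_Iic,
    hπ.measureReal_compl_prod measurableSet_Iic measurableSet_Iic]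

lemma integral_posPart_snd_sub_fst_rpow_eq_cdf [IsFiniteMeasure π] (hπ : IsCoupling π μ ν)
    (hp : 1 < p) (hint : Integrable (fun z : ℝ × ℝ => (z.2 - z.1)⁺ ^ p) π) :
    ∫ z, (z.2 - z.1)⁺ ^ p ∂π
      = p * (p - 1) *
        ∫ x, ∫ y in Ioi x, (μ.real (Iic x) - π.real (Iic x ×ˢ Iic y)) * (y - x) ^ (p - 2) := by
  have hswap : ∀ x y : ℝ, (π.map Prod.swap).real (Iic y ×ˢ Iic x) = π.real (Iic x ×ˢ Iic y) := by
    intro x y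
    rw [map_measureReal_apply measurable_swap (measurableSet_Iic.prod measurableSet_Iic),
      preimage_swap_prod]
  have h := hπ.map_swap.integral_posPart_fst_sub_snd_rpow_eq_cdf hp
    ((MeasurableEquiv.prodComm.measurableEmbedding.integrable_map_iff).2 hint)
  simp_rw [hswap] at h
  rw [← h]
  exact (MeasurableEquiv.prodComm.measurableEmbedding.integral_map
    (fun z : ℝ × ℝ => (z.1 - z.2)⁺ ^ p)).symm

end IsCoupling

theorem dallAglio_identity_general (p : ℝ) (hp : 1 < p) (μ ν : Measure ℝ) (π : Measure (ℝ × ℝ))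
    [IsFiniteMeasure π] (hπ : IsCoupling π μ ν)
    (hint : Integrable (fun z => |z.2 - z.1| ^ p) π)
    (F G : ℝ → ℝ) (H : ℝ → ℝ → ℝ)
    (hF : ∀ x, F x = (μ (Iic x)).toReal)
    (hG : ∀ y, G y = (ν (Iic y)).toReal)
    (hH : ∀ x y, H x y = (π (Iic x ×ˢ Iic y)).toReal) :
    ∫ z, |z.2 - z.1| ^ p ∂π
      = p * (p - 1) * (∫ y : ℝ, ∫ x in Ioi y, (G y - H x y) * (x - y) ^ (p - 2))
        + p * (p - 1) * (∫ x : ℝ, ∫ y in Ioi x, (F x - H x y) * (y - x) ^ (p - 2)) := by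
  have hsplit : ∀ z : ℝ × ℝ, |z.2 - z.1| ^ p = (z.1 - z.2)⁺ ^ p + (z.2 - z.1)⁺ ^ p := fun z => by
    rw [abs_rpow_eq_posPart_rpow_add_negPart_rpow (by linarith), ← posPart_neg, neg_sub, add_comm]
  have hintX : Integrable (fun z : ℝ × ℝ => (z.1 - z.2)⁺ ^ p) π :=
    integrable_posPart_rpow_of_abs (by linarith) (by fun_prop)
      (by simpa only [abs_sub_comm] using hint)
  have hintY : Integrable (fun z : ℝ × ℝ => (z.2 - z.1)⁺ ^ p) π :=
    integrable_posPart_rpow_of_abs (by linarith) (by fun_prop) hint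
  simp_rw [hsplit, hF, hG, hH, ← measureReal_def]
  rw [integral_add hintX hintY, hπ.integral_posPart_fst_sub_snd_rpow_eq_cdf hp hintX,
    hπ.integral_posPart_snd_sub_fst_rpow_eq_cdf hp hintY]

/-- dall'Aglio's identity: for `p > 1` and a coupling `π` of `μ, ν`
with joint distribution function `H`,
`∫ |y-x|^p dπ = p(p-1) ∫∫_{x>y} [G(y)-H(x,y)](x-y)^{p-2} dx dy
             + p(p-1) ∫∫_{y>x} [F(x)-H(x,y)](y-x)^{p-2} dy dx`. -/
theorem dallAglio_identity (p : ℝ) (hp : 1 < p)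
    (μ ν : MeasureTheory.Measure ℝ) [IsProbabilityMeasure μ] [IsProbabilityMeasure ν]
    (hμ : ∫⁻ x, ENNReal.ofReal (|x| ^ p) ∂μ ≠ ⊤)
    (hν : ∫⁻ x, ENNReal.ofReal (|x| ^ p) ∂ν ≠ ⊤)
    (π : MeasureTheory.Measure (ℝ × ℝ)) (hπ : IsCoupling π μ ν)
    (F G : ℝ → ℝ) (H : ℝ → ℝ → ℝ)
    (hF : ∀ x, F x = (μ (Iic x)).toReal)
    (hG : ∀ y, G y = (ν (Iic y)).toReal)
    (hH : ∀ x y, H x y = (π (Iic x ×ˢ Iic y)).toReal) :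
    ∫ z, |z.2 - z.1| ^ p ∂π
      = p * (p - 1) * (∫ y : ℝ, ∫ x in Ioi y, (G y - H x y) * (x - y) ^ (p - 2))
        + p * (p - 1) * (∫ x : ℝ, ∫ y in Ioi x, (F x - H x y) * (y - x) ^ (p - 2)) := by
  have := hπ.isFiniteMeasure
  exact dallAglio_identity_general p hp μ ν π hπ
    (hπ.integrable_abs_sub_rpow (by linarith) hμ hν) F G H hF hG hH
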